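/- For every term T and substitution σ, the interpretation ⟦T⟧σ is a computability predicate: ⟦T⟧σ ⊆ SN, ⟦T⟧σ is closed under reduction, and every neutral term all of whose one-step reducts belong to ⟦T⟧σ belongs to ⟦T⟧σ. -/

import Mathlib

set_option maxHeartbeats 1000000

/-! # Terms of λΠ/R (de Bruijn representation) -/

inductive Trm (F : Type) : Type
  | type : Trm F
  | kind : Trm F
  | var : ℕ → Trm F
  | sym : F → Trm F
  | pi : Trm F → Trm F → Trm F
  | app : Trm F → Trm F → Trm F
  | lam : Trm F → Trm F → Trm F

namespace Trm

variable {F : Type}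

/-- Lifting of a renaming under a binder. -/
def upRen (ρ : ℕ → ℕ) : ℕ → ℕ
  | 0 => 0
  | n + 1 => ρ n + 1

/-- Renaming of (de Bruijn) variables. -/
def rename (ρ : ℕ → ℕ) : Trm F → Trm F
  | .type => .type
  | .kind => .kind
  | .var n => .var (ρ n)
  | .sym f => .sym f
  | .pi A B => .pi (rename ρ A) (rename (upRen ρ) B)
  | .app t u => .app (rename ρ t) (rename ρ u)
  | .lam A b => .lam (rename ρ A) (rename (upRen ρ) b)

/-- Lifting of a substitution under a binder. -/
def up (σ : ℕ → Trm F) : ℕ → Trm F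
  | 0 => .var 0
  | n + 1 => rename Nat.succ (σ n)

/-- Capture-avoiding (parallel) substitution. -/
def subst (σ : ℕ → Trm F) : Trm F → Trm F
  | .type => .type
  | .kind => .kind
  | .var n => σ n
  | .sym f => .sym f
  | .pi A B => .pi (subst σ A) (subst (up σ) B)
  | .app t u => .app (subst σ t) (subst σ u)
  | .lam A b => .lam (subst σ A) (subst (up σ) b)

/-- Cons of a term on a substitution: `scons a σ` maps `0` to `a` and `n+1` to `σ n`. -/
def scons (a : Trm F) (σ : ℕ → Trm F) : ℕ → Trm F
  | 0 => a
  | n + 1 => σ n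

/-- Substitution of the first free variable: `t[x ↦ a]`. -/
def subst1 (a t : Trm F) : Trm F := subst (scons a .var) t

/-- Shifting of all free variables. -/
def shift : Trm F → Trm F := rename Nat.succ

/-- Application of a head term to a list of arguments: `appList h [t1,…,tn] = h t1 … tn`. -/
def appList (h : Trm F) : List (Trm F) → Trm F
  | [] => h
  | a :: as => appList (.app h a) as

/-- Free (de Bruijn) variables of a term. -/
def FV : Trm F → Set ℕ
  | .type => ∅
  | .kind => ∅
  | .var n => {n}
  | .sym _ => ∅
  | .pi A B => FV A ∪ {n | n + 1 ∈ FV B}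
  | .app t u => FV t ∪ FV u
  | .lam A b => FV A ∪ {n | n + 1 ∈ FV b}

/-- The class 𝕂 of kinds: `K = TYPE | Πx:t.K`. -/
def IsKind : Trm F → Prop
  | .type => True
  | .pi _ B => IsKind B
  | _ => False

/-- Sorts: `TYPE` and `KIND`. -/
def IsSort (s : Trm F) : Prop := s = .type ∨ s = .kind

/-- The product arity of a term: the number of leading products. -/
def piArity : Trm F → ℕ
  | .pi _ B => piArity B + 1
  | _ => 0

/-- Strip `n` leading products. -/
def piCodN : ℕ → Trm F → Trm F
  | 0, T => T
  | n + 1, .pi _ B => piCodN n B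
  | _ + 1, T => T

/-- The first `n` domains of the leading products, as a de Bruijn context
(type of variable `0` first, i.e. innermost first). -/
def teleN : ℕ → Trm F → List (Trm F)
  | 0, _ => []
  | n + 1, .pi A B => teleN n B ++ [A]
  | _ + 1, _ => []

/-- The full telescope of leading products, as a de Bruijn context. -/
def telescope (T : Trm F) : List (Trm F) := teleN (piArity T) T

/-- The domains of the leading products, outermost first. -/
def piDoms : Trm F → List (Trm F)
  | .pi A B => A :: piDoms B
  | _ => []

end Trm

/-- The subterm relation (reflexive and transitive). -/
inductive Subterm {F : Type} : Trm F → Trm F → Prop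
  | refl (t : Trm F) : Subterm t t
  | piL {t A B} : Subterm t A → Subterm t (.pi A B)
  | piR {t A B} : Subterm t B → Subterm t (.pi A B)
  | appL {t u v} : Subterm t u → Subterm t (.app u v)
  | appR {t u v} : Subterm t v → Subterm t (.app u v)
  | lamL {t A b} : Subterm t A → Subterm t (.lam A b)
  | lamR {t A b} : Subterm t b → Subterm t (.lam A b)

/-! # Rewriting -/

/-- A set of rewriting rules `l → r`. -/
abbrev Rules (F : Type) := Set (Trm F × Trm F)

/-- `R` is a rewriting system: for every rule `l → r`, `FV(r) ⊆ FV(l)` and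
`l` is of the form `f l⃗`. -/
def IsRewriteSystem {F : Type} (R : Rules F) : Prop :=
  ∀ p ∈ R, Trm.FV p.2 ⊆ Trm.FV p.1 ∧ ∃ (f : F) (ls : List (Trm F)), p.1 = Trm.appList (.sym f) ls

/-- A symbol is defined if it heads the left-hand side of some rule. -/
def Defined {F : Type} (R : Rules F) (f : F) : Prop :=
  ∃ (ls : List (Trm F)) (r : Trm F), (Trm.appList (.sym f) ls, r) ∈ R

/-- One-step reduction `→ = →β ∪ →R`: β-reduction together with the closure of the
rules of `R` by substitution and context. -/
inductive Red {F : Type} (R : Rules F) : Trm F → Trm F → Prop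
  | beta (A b a : Trm F) : Red R (.app (.lam A b) a) (Trm.subst1 a b)
  | rule {l r : Trm F} (σ : ℕ → Trm F) : (l, r) ∈ R → Red R (Trm.subst σ l) (Trm.subst σ r)
  | appL {t t' u} : Red R t t' → Red R (.app t u) (.app t' u)
  | appR {t u u'} : Red R u u' → Red R (.app t u) (.app t u')
  | piL {A A' B} : Red R A A' → Red R (.pi A B) (.pi A' B)
  | piR {A B B'} : Red R B B' → Red R (.pi A B) (.pi A B')
  | lamL {A A' b} : Red R A A' → Red R (.lam A b) (.lam A' b)
  | lamR {A b b'} : Red R b b' → Red R (.lam A b) (.lam A b')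

/-- Multi-step reduction `→*`. -/
def RedStar {F : Type} (R : Rules F) : Trm F → Trm F → Prop := Relation.ReflTransGen (Red R)

/-- Joinability `↓`. -/
def Joinable {F : Type} (R : Rules F) (t u : Trm F) : Prop :=
  ∃ v, RedStar R t v ∧ RedStar R u v

/-- Local confluence: `← · → ⊆ →* · *←`. -/
def LocallyConfluent {F : Type} (R : Rules F) : Prop :=
  ∀ t u v, Red R t u → Red R t v → Joinable R u v

/-- `t` is strongly normalizing (terminating): no infinite reduction sequence from `t`. -/
def SN {F : Type} (R : Rules F) (t : Trm F) : Prop := Acc (fun a b => Red R b a) t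

/-- The set of strongly normalizing terms. -/
def SNset {F : Type} (R : Rules F) : Set (Trm F) := {t | SN R t}

/-- `t` is in normal form. -/
def NormalForm {F : Type} (R : Rules F) (t : Trm F) : Prop := ∀ u, ¬ Red R t u

/-- Neutral terms: `(λx:A.t)u v⃗`, `x v⃗`, or `f v⃗` where every rule `f l⃗ → r ∈ R`
satisfies `|l⃗| ≤ |v⃗|`. -/
def Neutral {F : Type} (R : Rules F) (t : Trm F) : Prop :=
  (∃ (A b a : Trm F) (vs : List (Trm F)), t = Trm.appList (.app (.lam A b) a) vs) ∨
  (∃ (x : ℕ) (vs : List (Trm F)), t = Trm.appList (.var x) vs) ∨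
  (∃ (f : F) (vs : List (Trm F)), t = Trm.appList (.sym f) vs ∧
    ∀ (ls : List (Trm F)) (r : Trm F), (Trm.appList (.sym f) ls, r) ∈ R → ls.length ≤ vs.length)

/-- Computability predicates: `S ⊆ SN`, `S` is closed under reduction, and `S` contains
every neutral term all of whose one-step reducts are in `S`. -/
def IsCompPred {F : Type} (R : Rules F) (S : Set (Trm F)) : Prop :=
  S ⊆ SNset R ∧ (∀ t ∈ S, ∀ u, Red R t u → u ∈ S) ∧
  (∀ t, Neutral R t → (∀ u, Red R t u → u ∈ S) → t ∈ S)

/-! # Typing: λP extended with function symbols and conversion modulo `→` -/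

/-- The typing rules of λΠ/R: the rules of λP (in de Bruijn presentation) with the extra
rule (fun) `⊢ f : Θ_f` and conversion up to joinability for `→`. -/
inductive Typing {F : Type} (R : Rules F) (Θ sΘ : F → Trm F) :
    List (Trm F) → Trm F → Trm F → Prop
  | ax : Typing R Θ sΘ [] .type .kind
  | var {Γ A s} : Trm.IsSort s → Typing R Θ sΘ Γ A s →
      Typing R Θ sΘ (A :: Γ) (.var 0) (Trm.shift A)
  | weak {Γ A s b B} : Trm.IsSort s → Typing R Θ sΘ Γ A s → Typing R Θ sΘ Γ b B →
      Typing R Θ sΘ (A :: Γ) (Trm.shift b) (Trm.shift B)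
  | prod {Γ A B s} : Trm.IsSort s → Typing R Θ sΘ Γ A .type → Typing R Θ sΘ (A :: Γ) B s →
      Typing R Θ sΘ Γ (.pi A B) s
  | abs {Γ A b B s} : Trm.IsSort s → Typing R Θ sΘ (A :: Γ) b B →
      Typing R Θ sΘ Γ (.pi A B) s → Typing R Θ sΘ Γ (.lam A b) (.pi A B)
  | app {Γ t a A B} : Typing R Θ sΘ Γ t (.pi A B) → Typing R Θ sΘ Γ a A →
      Typing R Θ sΘ Γ (.app t a) (Trm.subst1 a B)
  | conv {Γ a A B s} : Typing R Θ sΘ Γ a A → Joinable R A B → Typing R Θ sΘ Γ B s →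
      Trm.IsSort s → Typing R Θ sΘ Γ a B
  | symb (f : F) : Trm.IsSort (sΘ f) → Typing R Θ sΘ [] (Θ f) (sΘ f) →
      Typing R Θ sΘ [] (.sym f) (Θ f)

/-- `→` preserves typing (subject reduction). -/
def PresTyping {F : Type} (R : Rules F) (Θ sΘ : F → Trm F) : Prop :=
  ∀ Γ t u T, Typing R Θ sΘ Γ t T → Red R t u → Typing R Θ sΘ Γ u T

/-- A substitution `γ` is well-typed from `Δ` to `Γ` (for a generic typing judgment `Ty`):
for all `(x : T) ∈ Δ`, `Ty Γ (xγ) (Tγ)`. -/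
def SubstTyped {F : Type} (Ty : List (Trm F) → Trm F → Trm F → Prop)
    (Γ : List (Trm F)) (γ : ℕ → Trm F) (Δ : List (Trm F)) : Prop :=
  ∀ i A, Δ[i]? = some A → Ty Γ (γ i) (Trm.subst (fun j => γ (j + i + 1)) A)

/-! # Interpretation of types as computability predicates -/

/-- `𝕀`: partial functions from terms to sets of terms. -/
abbrev Interp (F : Type) := Trm F → Part (Set (Trm F))

/-- Graph inclusion of partial functions. -/
def InterpLE {F : Type} (I J : Interp F) : Prop := ∀ T S, S ∈ I T → S ∈ J T

/-- `I` is the least fixpoint of `φ` on `𝕀` (ordered by graph inclusion). -/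
def IsLfpInterp {F : Type} (φ : Interp F → Interp F) (I : Interp F) : Prop :=
  φ I = I ∧ ∀ J, φ J = J → InterpLE I J

/-- The domain `D(I)`: terminating terms `T` such that whenever `T →* Πx:A.B`,
`A ∈ dom(I)` and `B[x↦a] ∈ dom(I)` for all `a ∈ I(A)`. -/
def domD {F : Type} (R : Rules F) (I : Interp F) : Set (Trm F) :=
  {T | SN R T ∧ ∀ A B, RedStar R T (.pi A B) →
    (I A).Dom ∧ ∀ S ∈ I A, ∀ a ∈ S, (I (Trm.subst1 a B)).Dom}

/-- `{t | ∀ a ∈ I(A), t a ∈ I(B[x↦a])}` (relational reading of the partial function `I`). -/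
def piPart {F : Type} (I : Interp F) (A B : Trm F) : Set (Trm F) :=
  {t | ∀ S ∈ I A, ∀ a ∈ S, ∀ S' ∈ I (Trm.subst1 a B), Trm.app t a ∈ S'}

open Classical in
/-- The monotone function `F : 𝕀 → 𝕀`: `dom(F(I)) = D(I)`; `F(I)(T) = SN` if the normal
form of `T` is not a product; `F(I)(T) = {t | ∀ a ∈ I(A), t a ∈ I(B[x↦a])}` if the normal
form of `T` is `Πx:A.B`. -/
noncomputable def interpF {F : Type} (R : Rules F) (I : Interp F) : Interp F := fun T =>
  ⟨T ∈ domD R I, fun _ =>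
    if h : ∃ A B, RedStar R T (.pi A B) ∧ NormalForm R (.pi A B) then
      piPart I h.choose h.choose_spec.choose
    else SNset R⟩

/-- The value of a partial interpretation at `T` (as a set). -/
def partMem {F : Type} (I : Interp F) (T : Trm F) : Set (Trm F) := {t | ∀ S ∈ I T, t ∈ S}

open Classical in
/-- The interpretation `⟦T⟧σ` of a term `T` wrt a substitution `σ`, relative to the least
fixpoint `I = ℐ` of `interpF`: `⟦s⟧σ = 𝒟` for `s` a sort;
`⟦Πx:A.K⟧σ = {t | ∀ a ∈ ⟦A⟧σ, t a ∈ ⟦K⟧[x↦a,σ]}` for `K` a kind;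
`⟦T⟧σ = ℐ(Tσ)` if `T` is neither a kind nor `KIND` and `Tσ ∈ 𝒟`; `⟦T⟧σ = SN` otherwise. -/
noncomputable def interp {F : Type} (R : Rules F) (I : Interp F) :
    Trm F → (ℕ → Trm F) → Set (Trm F)
  | .type, _ => domD R I
  | .kind, _ => domD R I
  | .pi A B, σ =>
      if Trm.IsKind B then
        {t | ∀ a ∈ interp R I A σ, Trm.app t a ∈ interp R I B (Trm.scons a σ)}
      else if Trm.subst σ (.pi A B) ∈ domD R I then partMem I (Trm.subst σ (.pi A B))
      else SNset R
  | .var n, σ =>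
      if Trm.subst σ (.var n) ∈ domD R I then partMem I (Trm.subst σ (.var n)) else SNset R
  | .sym g, σ =>
      if Trm.subst σ (.sym g) ∈ domD R I then partMem I (Trm.subst σ (.sym g)) else SNset R
  | .app t u, σ =>
      if Trm.subst σ (.app t u) ∈ domD R I then partMem I (Trm.subst σ (.app t u)) else SNset R
  | .lam A b, σ =>
      if Trm.subst σ (.lam A b) ∈ domD R I then partMem I (Trm.subst σ (.lam A b)) else SNset R

/-- `σ ⊨ Γ`: a substitution is adequate wrt an environment. -/
def Models {F : Type} (R : Rules F) (I : Interp F) (σ : ℕ → Trm F) (Γ : List (Trm F)) : Prop :=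
  ∀ i A, Γ[i]? = some A → σ i ∈ interp R I A (fun j => σ (j + i + 1))

/-- The typing map `Θ` is adequate: `f ∈ ⟦Θ_f⟧` whenever `⊢ Θ_f : s_f` and `Θ_f ∈ ⟦s_f⟧`. -/
def Adequate {F : Type} (R : Rules F) (Θ sΘ : F → Trm F) (I : Interp F) : Prop :=
  ∀ f : F, Typing R Θ sΘ [] (Θ f) (sΘ f) → Θ f ∈ interp R I (sΘ f) Trm.var →
    Trm.sym f ∈ interp R I (Θ f) Trm.var

/-- The substitution `[x⃗ ↦ l⃗]` (where `ls` lists the images of variables `0, 1, …`). -/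
def mkSubst {F : Type} (ls : List (Trm F)) : ℕ → Trm F := fun i =>
  (ls[i]?).getD (.var (i - ls.length))

/-- Composition of substitutions: `x ↦ (xγ)σ`. -/
def compSubst {F : Type} (γ σ : ℕ → Trm F) : ℕ → Trm F := fun i => Trm.subst σ (γ i)

/-- The set `ℂ` of terms `f t⃗` with `|t⃗| = arit(Θ_f)`, `⊢ Θ_f : s_f`, `Θ_f ∈ ⟦s_f⟧` and
`[x⃗↦t⃗] ⊨ Γ_f`. -/
def CC {F : Type} (R : Rules F) (Θ sΘ : F → Trm F) (I : Interp F) : Set (Trm F) :=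
  {t | ∃ (f : F) (ts : List (Trm F)), t = Trm.appList (.sym f) ts ∧
    ts.length = Trm.piArity (Θ f) ∧
    Typing R Θ sΘ [] (Θ f) (sΘ f) ∧ Θ f ∈ interp R I (sΘ f) Trm.var ∧
    Models R I (mkSubst ts.reverse) (Trm.telescope (Θ f))}

/-! # Dependency pairs -/

/-- Occurrences of `p` in a term, not at the root, such that `p` is not further applied
(i.e. `p` collects all the arguments of its head at this occurrence). -/
inductive MaxOccNR {F : Type} (p : Trm F) : Trm F → Prop
  | appL {u v} : MaxOccNR p u → MaxOccNR p (.app u v)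
  | appR {u v} : MaxOccNR p v → MaxOccNR p (.app u v)
  | appRroot {u} : MaxOccNR p (.app u p)
  | piL {A B} : MaxOccNR p A → MaxOccNR p (.pi A B)
  | piLroot {B} : MaxOccNR p (.pi p B)
  | piR {A B} : MaxOccNR p B → MaxOccNR p (.pi A B)
  | piRroot {A} : MaxOccNR p (.pi A p)
  | lamL {A b} : MaxOccNR p A → MaxOccNR p (.lam A b)
  | lamLroot {b} : MaxOccNR p (.lam p b)
  | lamR {A b} : MaxOccNR p b → MaxOccNR p (.lam A b)
  | lamRroot {A} : MaxOccNR p (.lam A p)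

/-- `p` occurs in `t` as a maximal application. -/
def MaxOcc {F : Type} (p t : Trm F) : Prop := t = p ∨ MaxOccNR p t

/-- Dependency pairs: `f l⃗ > g m⃗` iff there is a rule `f l⃗ → r ∈ R`, `g` is defined and
`g m⃗` is a subterm of `r` such that `m⃗` are all the arguments to which `g` is applied. -/
def DepPair {F : Type} (R : Rules F) (f : F) (ls : List (Trm F)) (g : F)
    (ms : List (Trm F)) : Prop :=
  Defined R g ∧ ∃ r, (Trm.appList (.sym f) ls, r) ∈ R ∧ MaxOcc (Trm.appList (.sym g) ms) r

/-- `f t⃗ →arg f u⃗`: reduction of exactly one argument. -/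
def ArgRed {F : Type} (R : Rules F) (t u : Trm F) : Prop :=
  ∃ (f : F) (pre post : List (Trm F)) (a b : Trm F), Red R a b ∧
    t = Trm.appList (.sym f) (pre ++ a :: post) ∧ u = Trm.appList (.sym f) (pre ++ b :: post)

/-- `>ₛ`: the closure of the dependency pair relation by substitution and left-application:
`f t₁…t_p >ₛ g u₁…u_q` iff there are a dependency pair `f l₁…l_i > g m₁…m_j` with `i ≤ p`
and `j ≤ q` and a substitution `σ` such that `t_k →* l_kσ` for `k ≤ i` and `m_kσ = u_k`
for `k ≤ j`. -/
def GTsub {F : Type} (R : Rules F) (t u : Trm F) : Prop :=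
  ∃ (f g : F) (ts us ls ms : List (Trm F)) (σ : ℕ → Trm F),
    t = Trm.appList (.sym f) ts ∧ u = Trm.appList (.sym g) us ∧
    DepPair R f ls g ms ∧ ls.length ≤ ts.length ∧ ms.length ≤ us.length ∧
    (∀ (k : ℕ) (tk lk : Trm F), ts[k]? = some tk → ls[k]? = some lk → RedStar R tk (Trm.subst σ lk)) ∧
    (∀ (k : ℕ) (mk : Trm F), ms[k]? = some mk → us[k]? = some (Trm.subst σ mk))

/-- The call relation `≻̃ = →arg* · >ₛ` on `ℂ`. -/
def CallRel {F : Type} (R : Rules F) (Θ sΘ : F → Trm F) (I : Interp F) (t u : Trm F) : Prop :=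
  t ∈ CC R Θ sΘ I ∧ u ∈ CC R Θ sΘ I ∧
    ∃ v, Relation.ReflTransGen (ArgRed R) t v ∧ GTsub R v u

/-! # Precedence and well-structured systems -/

/-- `f ⪰ g` (one step): `g` occurs in `Θ_f` or in the right-hand side of a rule of `f`. -/
def PrecBase {F : Type} (R : Rules F) (Θ : F → Trm F) (f g : F) : Prop :=
  Subterm (.sym g) (Θ f) ∨
  ∃ (ls : List (Trm F)) (r : Trm F), (Trm.appList (.sym f) ls, r) ∈ R ∧ Subterm (.sym g) r

/-- `⪰`: the smallest quasi-order containing `PrecBase`. -/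
def Preceq {F : Type} (R : Rules F) (Θ : F → Trm F) : F → F → Prop :=
  Relation.ReflTransGen (PrecBase R Θ)

/-- `≻`: the strict part of `⪰`. -/
def Prec {F : Type} (R : Rules F) (Θ : F → Trm F) (f g : F) : Prop :=
  Preceq R Θ f g ∧ ¬ Preceq R Θ g f

/-- The restricted type system `⊢_{≺ f}`: as `Typing`, but function symbols may only be
introduced when strictly smaller than `f` in the precedence. -/
inductive LTyp {F : Type} (R : Rules F) (Θ sΘ : F → Trm F) (f : F) :
    List (Trm F) → Trm F → Trm F → Prop
  | ax : LTyp R Θ sΘ f [] .type .kind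
  | var {Γ A s} : Trm.IsSort s → LTyp R Θ sΘ f Γ A s →
      LTyp R Θ sΘ f (A :: Γ) (.var 0) (Trm.shift A)
  | weak {Γ A s b B} : Trm.IsSort s → LTyp R Θ sΘ f Γ A s → LTyp R Θ sΘ f Γ b B →
      LTyp R Θ sΘ f (A :: Γ) (Trm.shift b) (Trm.shift B)
  | prod {Γ A B s} : Trm.IsSort s → LTyp R Θ sΘ f Γ A .type → LTyp R Θ sΘ f (A :: Γ) B s →
      LTyp R Θ sΘ f Γ (.pi A B) s
  | abs {Γ A b B s} : Trm.IsSort s → LTyp R Θ sΘ f (A :: Γ) b B →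
      LTyp R Θ sΘ f Γ (.pi A B) s → LTyp R Θ sΘ f Γ (.lam A b) (.pi A B)
  | app {Γ t a A B} : LTyp R Θ sΘ f Γ t (.pi A B) → LTyp R Θ sΘ f Γ a A →
      LTyp R Θ sΘ f Γ (.app t a) (Trm.subst1 a B)
  | conv {Γ a A B s} : LTyp R Θ sΘ f Γ a A → Joinable R A B → LTyp R Θ sΘ f Γ B s →
      Trm.IsSort s → LTyp R Θ sΘ f Γ a B
  | symb (g : F) : Prec R Θ f g → Trm.IsSort (sΘ g) → LTyp R Θ sΘ f [] (Θ g) (sΘ g) →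
      LTyp R Θ sΘ f [] (.sym g) (Θ g)

/-- The arguments `y⃗γ = [y₁γ, …, y_jγ]` of an instantiated dependency pair right-hand
side, where `y_j` is de Bruijn variable `0`. -/
def dpArgs {F : Type} (γ : ℕ → Trm F) (j : ℕ) : List (Trm F) :=
  (List.range j).reverse.map γ

/-- The restricted type system `⊢_{f l⃗}` (computability closure): as `Typing`, except that
types are required to be typable using symbols smaller than `f` only, and function symbols
are introduced either as undefined constants or through instances of dependency pairs of
`f l⃗`. -/
inductive RTyp {F : Type} (R : Rules F) (Θ sΘ : F → Trm F) (f : F) (ls : List (Trm F)) :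
    List (Trm F) → Trm F → Trm F → Prop
  | ax : RTyp R Θ sΘ f ls [] .type .kind
  | var {Γ A s} : Trm.IsSort s → LTyp R Θ sΘ f Γ A s →
      RTyp R Θ sΘ f ls (A :: Γ) (.var 0) (Trm.shift A)
  | weak {Γ A s b B} : Trm.IsSort s → LTyp R Θ sΘ f Γ A s → RTyp R Θ sΘ f ls Γ b B →
      RTyp R Θ sΘ f ls (A :: Γ) (Trm.shift b) (Trm.shift B)
  | prod {Γ A B s} : Trm.IsSort s → RTyp R Θ sΘ f ls Γ A .type →
      RTyp R Θ sΘ f ls (A :: Γ) B s → RTyp R Θ sΘ f ls Γ (.pi A B) s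
  | abs {Γ A b B s} : Trm.IsSort s → RTyp R Θ sΘ f ls (A :: Γ) b B →
      LTyp R Θ sΘ f Γ (.pi A B) s → RTyp R Θ sΘ f ls Γ (.lam A b) (.pi A B)
  | app {Γ t a A B s} : Trm.IsSort s → RTyp R Θ sΘ f ls Γ t (.pi A B) →
      RTyp R Θ sΘ f ls Γ a A → LTyp R Θ sΘ f Γ (.pi A B) s →
      RTyp R Θ sΘ f ls Γ (.app t a) (Trm.subst1 a B)
  | conv {Γ a A B s s'} : Trm.IsSort s → Trm.IsSort s' → RTyp R Θ sΘ f ls Γ a A →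
      Joinable R A B → LTyp R Θ sΘ f Γ B s → LTyp R Θ sΘ f Γ A s' →
      RTyp R Θ sΘ f ls Γ a B
  | dp {Γ : List (Trm F)} (g : F) (γ : ℕ → Trm F) (j : ℕ) :
      j ≤ Trm.piArity (Θ g) → Trm.IsSort (sΘ g) → LTyp R Θ sΘ f [] (Θ g) (sΘ g) →
      (∀ i A, (Trm.teleN j (Θ g))[i]? = some A →
        RTyp R Θ sΘ f ls Γ (γ i) (Trm.subst (fun k => γ (k + i + 1)) A)) →
      DepPair R f ls g (dpArgs γ j) →
      RTyp R Θ sΘ f ls Γ (Trm.appList (.sym g) (dpArgs γ j)) (Trm.subst γ (Trm.piCodN j (Θ g)))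
  | const (g : F) : ¬ Defined R g → Trm.IsSort (sΘ g) → LTyp R Θ sΘ f [] (Θ g) (sΘ g) →
      RTyp R Θ sΘ f ls [] (.sym g) (Θ g)

/-- `R` is well-structured (wrt the assignment `Δ` of an environment to every rule):
(a) `≻` is well-founded; (b) `|l⃗| ≤ arit(Θ_f)` for every rule `f l⃗ → r`;
(c) `|m⃗| ≤ arit(Θ_g)` for every dependency pair `f l⃗ > g m⃗`;
(d) `Δ_{f l⃗→r} ⊢_{f l⃗} r : U[x⃗↦l⃗]` for every rule `f l⃗ → r`, where `Θ_f = Πx⃗:T⃗.U`. -/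
def WellStructured {F : Type} (R : Rules F) (Θ sΘ : F → Trm F)
    (Δ : Trm F → Trm F → List (Trm F)) : Prop :=
  WellFounded (fun g f => Prec R Θ f g) ∧
  (∀ l r, (l, r) ∈ R → ∀ (f : F) ls, l = Trm.appList (.sym f) ls →
    ls.length ≤ Trm.piArity (Θ f)) ∧
  (∀ (f : F) ls (g : F) ms, DepPair R f ls g ms → ms.length ≤ Trm.piArity (Θ g)) ∧
  (∀ l r, (l, r) ∈ R → ∀ (f : F) ls, l = Trm.appList (.sym f) ls →
    RTyp R Θ sΘ f ls (Δ l r) r (Trm.subst (mkSubst ls.reverse) (Trm.piCodN ls.length (Θ f))))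

/-- `R` is accessible: for every rule `f l⃗ → r` with `Θ_f = Πx⃗:T⃗.U`, `|x⃗| = |l⃗|`, and
every substitution `σ`, `σ ⊨ Δ_{f l⃗→r}` whenever `⊢ Θ_f : s_f`, `Θ_f ∈ ⟦s_f⟧` and
`[x⃗↦l⃗]σ ⊨ x⃗:T⃗`. -/
def Accessible {F : Type} (R : Rules F) (Θ sΘ : F → Trm F) (I : Interp F)
    (Δ : Trm F → Trm F → List (Trm F)) : Prop :=
  ∀ l r, (l, r) ∈ R → ∀ (f : F) ls, l = Trm.appList (.sym f) ls → ∀ σ : ℕ → Trm F,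
    Typing R Θ sΘ [] (Θ f) (sΘ f) → Θ f ∈ interp R I (sΘ f) Trm.var →
    Models R I (compSubst (mkSubst ls.reverse) σ) (Trm.teleN ls.length (Θ f)) →
    Models R I σ (Δ l r)

/-- A term in `𝕂 ∪ {KIND}`. -/
def IsKindLike {F : Type} (t : Trm F) : Prop := Trm.IsKind t ∨ t = .kind

/-- `R` is plain function-passing (PFP): for every rule `f l⃗ → r` with `Θ_f = Πx⃗:T⃗.U` and
`|x⃗| = |l⃗|`, no `l_i` is a kind or `KIND`, and every `(y : T) ∈ Δ_{f l⃗→r}` satisfies: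
either there is `i` with `y = l_i` and `T = T_i[x⃗↦l⃗]`, or `y ∈ FV(l_i)` and `T = D t⃗`
with `D` undefined and `|t⃗| = arit(Θ_D)`. -/
def PFP {F : Type} (R : Rules F) (Θ : F → Trm F) (Δ : Trm F → Trm F → List (Trm F)) : Prop :=
  ∀ l r, (l, r) ∈ R → ∀ (f : F) ls, l = Trm.appList (.sym f) ls →
    (∀ li ∈ ls, ¬ IsKindLike li) ∧
    (∀ i A, (Δ l r)[i]? = some A →
      (∃ (k : ℕ) (Tk : Trm F), ls[k]? = some (Trm.var i) ∧ (Trm.piDoms (Θ f))[k]? = some Tk ∧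
        Trm.rename (fun j => j + i + 1) A = Trm.subst (mkSubst ((ls.take k).reverse)) Tk) ∨
      ((∃ (k : ℕ) (lk : Trm F), ls[k]? = some lk ∧ i ∈ Trm.FV lk) ∧
        ∃ (D : F) (ts : List (Trm F)), Trm.rename (fun j => j + i + 1) A =
          Trm.appList (.sym D) ts ∧ ¬ Defined R D ∧ ts.length = Trm.piArity (Θ D)))

/-! # Size-change termination -/

/-- Entries of size-change matrices: `−1`, `0` or `∞`. -/
inductive SCTe : Type
  | minusOne : SCTe
  | zero : SCTe
  | infty : SCTe
deriving DecidableEq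

/-- Min-plus multiplication of entries (addition, truncated at `−1`). -/
def SCTe.comp : SCTe → SCTe → SCTe
  | .infty, _ => .infty
  | _, .infty => .infty
  | .minusOne, _ => .minusOne
  | _, .minusOne => .minusOne
  | .zero, .zero => .zero

/-- Minimum of entries (`−1 < 0 < ∞`). -/
def SCTe.min : SCTe → SCTe → SCTe
  | .minusOne, _ => .minusOne
  | _, .minusOne => .minusOne
  | .zero, _ => .zero
  | .infty, x => x

/-- Base of the relation `⊵`: `f t₁…t_n ⊵ t_i` for `f ∈ F`. -/
def ArgSubBase {F : Type} (t u : Trm F) : Prop :=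
  ∃ (f : F) (ts : List (Trm F)), t = Trm.appList (.sym f) ts ∧ u ∈ ts

/-- `⊵`: the smallest transitive relation such that `f t₁…t_n ⊵ t_i` for `f ∈ F`. -/
def ArgGT {F : Type} : Trm F → Trm F → Prop := Relation.TransGen ArgSubBase

open Classical in
/-- The size-change matrix of a dependency pair `f l₁…l_p > g m₁…m_q`:
`a_{ij} = −1` if `l_i ⊵ m_j`, `a_{ij} = 0` if `l_i = m_j`, `a_{ij} = ∞` otherwise
(in particular if `i > p` or `j > q`). -/
noncomputable def dpMatrix {F : Type} (ls ms : List (Trm F)) : ℕ → ℕ → SCTe := fun i j =>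
  match ls[i]?, ms[j]? with
  | some li, some mj =>
      if ArgGT li mj then .minusOne else if li = mj then .zero else .infty
  | _, _ => .infty

/-- Min-plus product of matrices, the middle dimension being `d`. -/
def matComp (d : ℕ) (M N : ℕ → ℕ → SCTe) : ℕ → ℕ → SCTe := fun i j =>
  ((List.range d).map fun k => (M i k).comp (N k j)).foldr SCTe.min .infty

/-- The transitive closure of the call graph of `R`: edges are labeled by the matrices of
the dependency pairs, multiplied in the min-plus semiring along paths. -/
inductive TCEdge {F : Type} (R : Rules F) (Θ : F → Trm F) : F → F → (ℕ → ℕ → SCTe) → Prop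
  | base {f g : F} {ls ms : List (Trm F)} : DepPair R f ls g ms →
      TCEdge R Θ f g (dpMatrix ls ms)
  | comp {f g h : F} {M N : ℕ → ℕ → SCTe} : TCEdge R Θ f g M → TCEdge R Θ g h N →
      TCEdge R Θ f h (matComp (Trm.piArity (Θ g)) M N)

/-- `R` is size-change terminating: in the transitive closure of the call graph, every
idempotent matrix labeling a loop has some `−1` on its diagonal. -/
def SCT {F : Type} (R : Rules F) (Θ : F → Trm F) : Prop :=
  ∀ (f : F) (M : ℕ → ℕ → SCTe), TCEdge R Θ f f M → matComp (Trm.piArity (Θ f)) M M = M →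
    ∃ i < Trm.piArity (Θ f), M i i = SCTe.minusOne

namespace Trm

variable {F : Type}

/-- The head of an application spine. -/
def spineHead : Trm F → Trm F
  | .app t _ => spineHead t
  | t => t

/-- The number of arguments in an application spine. -/
def spineLength : Trm F → ℕ
  | .app t _ => spineLength t + 1
  | _ => 0

theorem spineHead_appList (h : Trm F) (vs : List (Trm F)) :
    spineHead (appList h vs) = spineHead h := by
  induction vs generalizing h with
  | nil => rfl
  | cons a as ih => exact ih _

theorem spineLength_appList (h : Trm F) (vs : List (Trm F)) :
    spineLength (appList h vs) = spineLength h + vs.length := by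
  induction vs generalizing h with
  | nil => rfl
  | cons a as ih => simp only [appList, ih, spineLength, List.length_cons]; omega

theorem appList_concat (h : Trm F) (vs : List (Trm F)) (a : Trm F) :
    appList h (vs ++ [a]) = .app (appList h vs) a := by
  induction vs generalizing h with
  | nil => rfl
  | cons b bs ih => exact ih _

theorem subst_appList (σ : ℕ → Trm F) (h : Trm F) (vs : List (Trm F)) :
    subst σ (appList h vs) = appList (subst σ h) (vs.map (subst σ)) := by
  induction vs generalizing h with
  | nil => rfl
  | cons a as ih => exact ih _

end Trm

section Reduction

variable {F : Type} {R : Rules F}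

theorem IsRewriteSystem.exists_spine (hRS : IsRewriteSystem R) {l r : Trm F} (h : (l, r) ∈ R)
    (σ : ℕ → Trm F) :
    ∃ (f : F) (ls : List (Trm F)), l = Trm.appList (.sym f) ls ∧
      (Trm.subst σ l).spineHead = .sym f ∧ (Trm.subst σ l).spineLength = ls.length := by
  obtain ⟨-, f, ls, hl⟩ := hRS _ h
  refine ⟨f, ls, hl, ?_, ?_⟩
  · rw [show l = _ from hl, Trm.subst_appList, Trm.spineHead_appList]; rfl
  · rw [show l = _ from hl, Trm.subst_appList, Trm.spineLength_appList, List.length_map]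
    exact Nat.zero_add _

theorem normalForm_var (hRS : IsRewriteSystem R) (n : ℕ) : NormalForm R (.var n) := by
  intro u hu
  generalize ht : Trm.var n = t at hu
  cases hu with
  | rule σ h =>
    obtain ⟨f, ls, -, hh, -⟩ := hRS.exists_spine h σ
    rw [← ht] at hh
    cases hh
  | _ => cases ht

theorem neutral_var (n : ℕ) : Neutral R (.var n) := .inr (.inl ⟨n, [], rfl⟩)

theorem Neutral.ne_pi {t : Trm F} (ht : Neutral R t) (A B : Trm F) : t ≠ .pi A B := by
  rintro rfl
  rcases ht with ⟨A', b, a, vs, h⟩ | ⟨x, vs, h⟩ | ⟨f, vs, h, -⟩ <;>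
  · have := congrArg Trm.spineHead h
    rw [Trm.spineHead_appList] at this
    cases this

theorem Neutral.ne_lam {t : Trm F} (ht : Neutral R t) (A b : Trm F) : t ≠ .lam A b := by
  rintro rfl
  rcases ht with ⟨A', b', a, vs, h⟩ | ⟨x, vs, h⟩ | ⟨f, vs, h, -⟩
  · have := congrArg Trm.spineLength h
    rw [Trm.spineLength_appList] at this
    simp only [Trm.spineLength] at this
    omega
  all_goals
    have := congrArg Trm.spineHead h
    rw [Trm.spineHead_appList] at this
    cases this

theorem Neutral.app {t : Trm F} (ht : Neutral R t) (a : Trm F) : Neutral R (.app t a) := by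
  rcases ht with ⟨A, b, u, vs, rfl⟩ | ⟨x, vs, rfl⟩ | ⟨f, vs, rfl, h⟩
  · exact .inl ⟨A, b, u, vs ++ [a], (Trm.appList_concat _ _ _).symm⟩
  · exact .inr (.inl ⟨x, vs ++ [a], (Trm.appList_concat _ _ _).symm⟩)
  · refine .inr (.inr ⟨f, vs ++ [a], (Trm.appList_concat _ _ _).symm, fun ls r hr => ?_⟩)
    exact (h ls r hr).trans (by simp)

/-- A rule cannot match a neutral term applied to one more argument. -/
theorem Neutral.app_ne_subst (hRS : IsRewriteSystem R) {t : Trm F} (ht : Neutral R t)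
    {l r : Trm F} (hr : (l, r) ∈ R) (σ : ℕ → Trm F) (a : Trm F) :
    .app t a ≠ Trm.subst σ l := by
  intro h
  obtain ⟨f, ls, hl, hh, hn⟩ := hRS.exists_spine hr σ
  rw [← h] at hh hn
  simp only [Trm.spineHead, Trm.spineLength] at hh hn
  rcases ht with ⟨A, b, u, vs, rfl⟩ | ⟨x, vs, rfl⟩ | ⟨g, vs, rfl, hg⟩ <;>
    rw [Trm.spineHead_appList] at hh <;> cases hh
  have := hg ls r (hl ▸ hr)
  rw [Trm.spineLength_appList] at hn
  simp only [Trm.spineLength] at hn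
  omega

theorem Neutral.red_app (hRS : IsRewriteSystem R) {t a w : Trm F} (ht : Neutral R t)
    (h : Red R (.app t a) w) :
    (∃ t', Red R t t' ∧ w = .app t' a) ∨ ∃ a', Red R a a' ∧ w = .app t a' := by
  generalize hs : Trm.app t a = s at h
  cases h with
  | beta A b u => cases hs; exact absurd rfl (ht.ne_lam A b)
  | rule σ hr => exact absurd hs (ht.app_ne_subst hRS hr σ a)
  | appL h => cases hs; exact .inl ⟨_, h, rfl⟩
  | appR h => cases hs; exact .inr ⟨_, h, rfl⟩
  | _ => cases hs

theorem SN.of_app {t a : Trm F} (h : SN R (.app t a)) : SN R t := by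
  generalize hs : Trm.app t a = s at h
  induction h generalizing t with
  | intro s _ ih =>
    subst hs
    exact ⟨_, fun t' ht' => ih _ (Red.appL ht') rfl⟩

end Reduction

section ComputabilityPredicates

variable {F : Type} {R : Rules F}

theorem IsCompPred.var_mem (hRS : IsRewriteSystem R) {S : Set (Trm F)} (hS : IsCompPred R S)
    (n : ℕ) : Trm.var n ∈ S :=
  hS.2.2 _ (neutral_var n) fun u hu => absurd hu (normalForm_var hRS n u)

theorem IsCompPred.mem_of_redStar_app {S : Set (Trm F)} (hS : IsCompPred R S) {t a b : Trm F}
    (ha : Trm.app t a ∈ S) (hab : RedStar R a b) : Trm.app t b ∈ S := by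
  induction hab with
  | refl => exact ha
  | tail _ hbc ih => exact hS.2.1 _ ih _ (Red.appR hbc)

theorem isCompPred_SNset : IsCompPred R (SNset R) :=
  ⟨subset_rfl, fun _ ht _ hu => Acc.inv ht hu, fun _ _ h => ⟨_, h⟩⟩

/-- The dependent function space between computability predicates is a computability predicate;
no invariance of the codomain under reduction of the argument is needed. -/
theorem isCompPred_pi (hRS : IsRewriteSystem R) {S : Set (Trm F)} {S' : Trm F → Set (Trm F)}
    (hS : IsCompPred R S) (hS' : ∀ a ∈ S, IsCompPred R (S' a)) :
    IsCompPred R {t | ∀ a ∈ S, Trm.app t a ∈ S' a} := by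
  refine ⟨fun t ht => ?_, fun t ht u hu a ha => ?_, fun t hn ht a ha => ?_⟩
  · have h0 := hS.var_mem hRS 0
    exact SN.of_app ((hS' _ h0).1 (ht _ h0))
  · exact (hS' a ha).2.1 _ (ht a ha) _ (Red.appL hu)
  · suffices H : ∀ b, SN R b → RedStar R a b → Trm.app t b ∈ S' a from
      H a (hS.1 ha) Relation.ReflTransGen.refl
    intro b hb
    induction hb with
    | intro b _ ih =>
      intro hab
      refine (hS' a ha).2.2 _ (hn.app b) fun w hw => ?_
      rcases hn.red_app hRS hw with ⟨t', ht', rfl⟩ | ⟨b', hb', rfl⟩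
      · exact (hS' a ha).mem_of_redStar_app (ht t' ht' a ha) hab
      · exact ih b' hb' (hab.tail hb')

theorem isCompPred_domD (I : Interp F) : IsCompPred R (domD R I) := by
  refine ⟨fun t ht => ht.1, fun t ht u hu => ⟨Acc.inv ht.1 hu, fun A B h => ?_⟩,
    fun t hn ht => ⟨⟨_, fun u hu => (ht u hu).1⟩, fun A B h => ?_⟩⟩
  · exact ht.2 A B (Relation.ReflTransGen.head hu h)
  · rcases Relation.ReflTransGen.cases_head h with h | ⟨u, hu, h⟩
    · exact absurd h (hn.ne_pi A B)
    · exact (ht u hu).2 A B h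

end ComputabilityPredicates

section LeastFixpoint

variable {F : Type} {R : Rules F} {I : Interp F}

/-- The inductively generated part of the domain of a fixpoint `I` of `interpF R`. -/
inductive InductiveDom (R : Rules F) (I : Interp F) : Trm F → Prop
  | intro {T : Trm F} (sn : SN R T)
      (dom : ∀ A B, RedStar R T (.pi A B) → InductiveDom R I A)
      (cod : ∀ A B, RedStar R T (.pi A B) → ∀ S ∈ I A, ∀ a ∈ S,
        InductiveDom R I (Trm.subst1 a B)) : InductiveDom R I T

theorem dom_iff_mem_domD (hI : interpF R I = I) (T : Trm F) : (I T).Dom ↔ T ∈ domD R I := by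
  conv_lhs => rw [← hI]
  exact Iff.rfl

theorem InductiveDom.dom_of_fixpoint (hI : interpF R I = I) {T : Trm F}
    (h : InductiveDom R I T) : (I T).Dom := by
  induction h with
  | intro sn _ _ ih1 ih2 =>
    exact (dom_iff_mem_domD hI _).2 ⟨sn, fun A B h => ⟨ih1 A B h, ih2 A B h⟩⟩

/-- The restriction of `I` to the inductively generated part of its domain. -/
def restrictInductive (R : Rules F) (I : Interp F) : Interp F := fun T =>
  ⟨InductiveDom R I T ∧ (I T).Dom, fun h => (I T).get h.2⟩

theorem restrictInductive_eq {T : Trm F} (h : InductiveDom R I T) :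
    restrictInductive R I T = I T :=
  Part.ext' ⟨fun h' => h'.2, fun h' => ⟨h, h'⟩⟩ fun _ _ => rfl

theorem mem_domD_restrictInductive (hI : interpF R I = I) (T : Trm F) :
    T ∈ domD R (restrictInductive R I) ↔ InductiveDom R I T := by
  constructor
  · rintro ⟨sn, h⟩
    refine .intro sn (fun A B hAB => (h A B hAB).1.1) fun A B hAB S hS a ha => ?_
    rw [← restrictInductive_eq (h A B hAB).1.1] at hS
    exact ((h A B hAB).2 S hS a ha).1
  · rintro ⟨sn, hd, hc⟩
    refine ⟨sn, fun A B hAB => ⟨⟨hd A B hAB, (hd A B hAB).dom_of_fixpoint hI⟩, ?_⟩⟩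
    intro S hS a ha
    rw [restrictInductive_eq (hd A B hAB)] at hS
    have := hc A B hAB S hS a ha
    exact ⟨this, this.dom_of_fixpoint hI⟩

theorem piPart_restrictInductive {T A B : Trm F} (hT : InductiveDom R I T)
    (hAB : RedStar R T (.pi A B)) : piPart (restrictInductive R I) A B = piPart I A B := by
  obtain ⟨-, hd, hc⟩ := hT
  ext t
  simp only [piPart, Set.mem_ofPred_eq, restrictInductive_eq (hd A B hAB)]
  refine forall₄_congr fun S hS a ha => ?_
  rw [restrictInductive_eq (hc A B hAB S hS a ha)]

theorem interpF_restrictInductive (hI : interpF R I = I) :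
    interpF R (restrictInductive R I) = restrictInductive R I := by
  funext T
  by_cases hT : InductiveDom R I T
  · rw [restrictInductive_eq hT]
    conv_rhs => rw [← hI]
    refine Part.ext' ?_ fun _ _ => ?_
    · exact (mem_domD_restrictInductive hI T).trans
        ⟨fun h => (dom_iff_mem_domD hI T).1 (h.dom_of_fixpoint hI), fun _ => hT⟩
    · simp only [interpF]
      split_ifs with h
      · exact piPart_restrictInductive hT h.choose_spec.choose_spec.1
      · rfl
  · refine Part.ext' ?_ fun h _ => absurd ((mem_domD_restrictInductive hI T).1 h) hT
    exact ⟨fun h => absurd ((mem_domD_restrictInductive hI T).1 h) hT, fun h => absurd h.1 hT⟩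

theorem IsLfpInterp.inductiveDom (hI : IsLfpInterp (interpF R) I) {U : Trm F}
    (h : (I U).Dom) : InductiveDom R I U := by
  have := hI.2 _ (interpF_restrictInductive hI.1) U _ (Part.get_mem h)
  exact (Part.dom_iff_mem.2 ⟨_, this⟩).1

theorem InductiveDom.isCompPred (hRS : IsRewriteSystem R) (hI : interpF R I = I) {T : Trm F}
    (hT : InductiveDom R I T) : ∀ S ∈ I T, IsCompPred R S := by
  induction hT with
  | @intro T _ hd hc ihd ihc =>
    intro S hS
    rw [← hI] at hS
    obtain ⟨hdom, rfl⟩ := hS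
    simp only [interpF]
    split_ifs with h
    · have hAB := h.choose_spec.choose_spec.1
      generalize h.choose_spec.choose = B at hAB ⊢
      generalize h.choose = A at hAB ⊢
      have hA := Part.get_mem ((hd A B hAB).dom_of_fixpoint hI)
      have key := isCompPred_pi hRS (S' := partMem I ∘ fun a => Trm.subst1 a B)
        (ihd A B hAB _ hA) fun a ha => by
          have hB := Part.get_mem ((hc A B hAB _ hA a ha).dom_of_fixpoint hI)
          convert ihc A B hAB _ hA a ha _ hB using 1
          ext t
          exact ⟨fun ht => ht _ hB, fun ht S hS => Part.mem_unique hB hS ▸ ht⟩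
      convert key using 1
      ext t
      exact ⟨fun ht a ha S' hS' => ht _ hA a ha S' hS',
        fun ht S hS a ha S' hS' => ht a (Part.mem_unique hS hA ▸ ha) S' hS'⟩
    · exact isCompPred_SNset

theorem IsLfpInterp.isCompPred_partMem (hRS : IsRewriteSystem R)
    (hI : IsLfpInterp (interpF R) I) {T : Trm F} (hT : T ∈ domD R I) :
    IsCompPred R (partMem I T) := by
  have hdom := (dom_iff_mem_domD hI.1 T).2 hT
  have hmem := Part.get_mem hdom
  convert (hI.inductiveDom hdom).isCompPred hRS hI.1 _ hmem using 1
  ext t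
  exact ⟨fun ht => ht _ hmem, fun ht S hS => Part.mem_unique hmem hS ▸ ht⟩

end LeastFixpoint

/-- Lemma 4(a) of the paper. For every term `T` and substitution `σ`,
the interpretation `⟦T⟧σ` is a computability predicate. -/
theorem interp_is_comp_pred {F : Type} (R : Rules F)
    (hRS : IsRewriteSystem R)
    (hconf : LocallyConfluent R)
    (calI : Interp F) (hlfp : IsLfpInterp (interpF R) calI) :
    ∀ (T : Trm F) (σ : ℕ → Trm F), IsCompPred R (interp R calI T σ) := by
  intro T
  induction T with
  | type => intro σ; exact isCompPred_domD calI
  | kind => intro σ; exact isCompPred_domD calI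
  | pi A B ihA ihB =>
    intro σ
    simp only [interp]
    split_ifs with hk hd
    · exact isCompPred_pi hRS (ihA σ) fun a _ => ihB (Trm.scons a σ)
    · exact hlfp.isCompPred_partMem hRS hd
    · exact isCompPred_SNset
  | _ =>
    intro σ
    simp only [interp]
    split_ifs with hd
    · exact hlfp.isCompPred_partMem hRS hd
    · exact isCompPred_SNset
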